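/- arXiv:2407.21165 — 15 statements merged into one kernel-verified Lean document; each statement's English description precedes it below -/
import Mathlib

section
/- The action of Kˣ on the set of 2-dimensional F-subspaces of K, given by x • W = {x·w : w ∈ W}, has exactly q + 1 orbits. -/
open Module

/-- span of 1 and y -/
noncomputable def Wy (F : Type*) {K : Type*} [Field F] [Field K] [Algebra F K] (y : K) : Submodule F K :=
  Submodule.span F {1, y}

section
variable {F K : Type*} [Field F] [Field K] [Algebra F K]

lemma mem_Wy (y z : K) : z ∈ Wy F y ↔ ∃ a b : F, z = algebraMap F K a * y + algebraMap F K b := by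
  unfold Wy
  rw [Submodule.mem_span_pair]
  constructor
  · rintro ⟨a, b, h⟩
    exact ⟨b, a, by rw [← h, Algebra.smul_def, Algebra.smul_def]; ring⟩
  · rintro ⟨a, b, h⟩
    exact ⟨b, a, by rw [h, Algebra.smul_def, Algebra.smul_def]; ring⟩

lemma finrank_Wy (y : K) (hy : y ∉ Set.range (algebraMap F K)) : finrank F (Wy F y) = 2 := by
  have h : LinearIndependent F ![(1 : K), y] := by
    rw [LinearIndependent.pair_iff]
    intro s t hst
    rw [Algebra.smul_def, Algebra.smul_def] at hst
    have ht : t = 0 := by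
      by_contra ht
      apply hy
      refine ⟨-s / t, ?_⟩
      have : algebraMap F K t ≠ 0 := by simpa using ht
      rw [map_div₀, map_neg]
      field_simp
      linear_combination -hst
    subst ht
    simpa using hst
  have := finrank_span_eq_card h
  have hr : Set.range ![(1 : K), y] = {1, y} := by
    rw [Matrix.range_cons, Matrix.range_cons, Matrix.range_empty, Set.union_empty]; rfl
  rw [hr] at this
  rw [Fintype.card_fin] at this
  exact this

lemma map_eq [FiniteDimensional F K] (x : K) (hx : x ≠ 0) (W W' : Submodule F K) (hW : finrank F W = finrank F W')
    (h : ∀ w ∈ W, x * w ∈ W') : Submodule.map (LinearMap.mulLeft F x) W = W' := by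
  apply Submodule.eq_of_le_of_finrank_eq
  · rintro _ ⟨w, hw, rfl⟩
    exact h w hw
  · rw [← hW]
    exact (Submodule.equivMapOfInjective (LinearMap.mulLeft F x)
      (fun a b h => mul_left_cancel₀ hx h) W).finrank_eq.symm
end

section
variable {F K : Type*} [Field F] [Field K] [Algebra F K] [Fintype F] [Fintype K]

lemma exE (hK : finrank F K = 4) : ∃ E : IntermediateField F K, finrank F E = 2 := by
  have h4 : Nat.card Gal(K/F) = 4 := by rw [IsGalois.card_aut_eq_finrank, hK]
  obtain ⟨H, hH⟩ := Sylow.exists_subgroup_card_pow_prime (G := Gal(K/F)) 2 (n := 1) (by rw [h4]; norm_num)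
  refine ⟨IntermediateField.fixedField H, ?_⟩
  have := IntermediateField.finrank_fixedField_eq_card H
  have h2 := finrank_mul_finrank F (IntermediateField.fixedField H) K
  rw [this, hH, hK] at h2
  omega

lemma memE (E : IntermediateField F K) (hE : finrank F E = 2) (y : K) :
    y ∈ E ↔ y ^ (Fintype.card F ^ 2) = y := by
  classical
  have : Fintype E := Fintype.ofFinite E
  have hc : Fintype.card E = Fintype.card F ^ 2 := by rw [card_eq_pow_finrank (K := F), hE]
  have h1 : 1 < Fintype.card F ^ 2 := Nat.one_lt_pow two_ne_zero Fintype.one_lt_card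
  have hfw : ∀ y ∈ E, y ^ (Fintype.card F ^ 2) = y := by
    intro y hy
    have := FiniteField.pow_card (⟨y, hy⟩ : E)
    rw [hc] at this
    simpa using congrArg (Subtype.val) this
  refine ⟨hfw y, fun h => ?_⟩
  set p : Polynomial K := Polynomial.X ^ (Fintype.card F ^ 2) - Polynomial.X with hp
  have hp0 : p ≠ 0 := FiniteField.X_pow_card_sub_X_ne_zero K h1
  have hmem : ∀ z : K, z ∈ p.roots.toFinset ↔ z ^ (Fintype.card F ^ 2) = z := by
    intro z
    rw [Multiset.mem_toFinset, Polynomial.mem_roots hp0]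
    simp [hp, Polynomial.IsRoot, sub_eq_zero]
  have hsub : (Finset.univ.map (Function.Embedding.subtype (fun x : K => x ∈ E))) ⊆ p.roots.toFinset := by
    intro z hz
    rw [hmem]
    simp only [Finset.mem_map, Finset.mem_univ, true_and] at hz
    obtain ⟨w, rfl⟩ := hz
    exact hfw _ w.2
  have hcard : p.roots.toFinset.card ≤ (Finset.univ.map (Function.Embedding.subtype (fun x : K => x ∈ E))).card := by
    rw [Finset.card_map, Finset.card_univ]
    refine (Multiset.toFinset_card_le _).trans ((Polynomial.card_roots' p).trans ?_)
    rw [hp, FiniteField.X_pow_card_sub_X_natDegree_eq K h1]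
    exact hc.ge
  have heq := Finset.eq_of_subset_of_card_le hsub hcard
  have := (hmem y).2 h
  rw [← heq] at this
  simp only [Finset.mem_map, Finset.mem_univ, true_and] at this
  obtain ⟨w, rfl⟩ := this
  exact w.2

lemma quadE (E : IntermediateField F K) (hE : finrank F E = 2) (y : K) (hy : y ∉ E)
    (a b c : F) (h : algebraMap F K a * y ^ 2 + algebraMap F K b * y + algebraMap F K c = 0) :
    a = 0 ∧ b = 0 ∧ c = 0 := by
  by_contra hne
  set p : Polynomial F := Polynomial.C a * Polynomial.X ^ 2 + Polynomial.C b * Polynomial.X + Polynomial.C c with hp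
  have hp0 : p ≠ 0 := by
    intro h0
    apply hne
    have e0 := congrArg (fun r => Polynomial.coeff r 0) h0
    have e1 := congrArg (fun r => Polynomial.coeff r 1) h0
    have e2 := congrArg (fun r => Polynomial.coeff r 2) h0
    simp [hp, Polynomial.coeff_X, Polynomial.coeff_C] at e0 e1 e2
    exact ⟨e2, e1, e0⟩
  have hev : Polynomial.aeval y p = 0 := by simpa [hp] using h
  have hd : (minpoly F y).natDegree ≤ 2 :=
    (Polynomial.natDegree_le_of_dvd (minpoly.dvd F y hev) hp0).trans Polynomial.natDegree_quadratic_le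
  have hint : IsIntegral F y := IsIntegral.of_finite F y
  have hpos := minpoly.natDegree_pos hint
  by_cases h1 : (minpoly F y).natDegree = 1
  · obtain ⟨f, rfl⟩ := minpoly.natDegree_eq_one_iff.1 h1
    exact hy (E.algebraMap_mem f)
  · have h2 : finrank F (IntermediateField.adjoin F {y}) = 2 := by
      rw [IntermediateField.adjoin.finrank hint]; omega
    exact hy ((memE E hE y).2 ((memE _ h2 y).1 (IntermediateField.mem_adjoin_simple_self F y)))

/-- the explicit parametrisation -/
noncomputable def par (F : Type*) {K : Type*} [Field F] [Field K] [Algebra F K] (y : K) :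
    (Fˣ × F) ⊕ (F × Fˣ × F) → K
  | Sum.inl (a, b) => algebraMap F K a * y + algebraMap F K b
  | Sum.inr (a, b, d) => algebraMap F K a + algebraMap F K b / (y + algebraMap F K d)

lemma card_par (E : IntermediateField F K) (hE : finrank F E = 2) (y : K) (hy : y ∉ E) :
    Nat.card {z : K // z ∉ Set.range (algebraMap F K) ∧ ∃ u ∈ Wy F y, ∃ v ∈ Wy F y, u ≠ 0 ∧ z = v / u}
      = (Fintype.card F - 1) * Fintype.card F + Fintype.card F * ((Fintype.card F - 1) * Fintype.card F) := by
  classical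
  have quad := quadE E hE y hy
  have hlin : ∀ d : F, y + algebraMap F K d ≠ 0 := by
    intro d h
    have := quad 0 1 d (by simpa using h)
    exact one_ne_zero this.2.1
  have hinj : Function.Injective (par F y) := by
    have aux : ∀ (a : Fˣ) (b a' : F) (b' : Fˣ) (d' : F),
        par F y (Sum.inl (a, b)) ≠ par F y (Sum.inr (a', b', d')) := by
      intro a b a' b' d' h
      simp only [par] at h
      have := hlin d'
      field_simp at h
      have := quad a (a * d' + b - a') ((b - a') * d' - b') (by
        simp only [map_add, map_sub, map_mul]
        linear_combination h)
      exact a.ne_zero this.1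
    rintro (⟨a, b⟩ | ⟨a, b, d⟩) (⟨a', b'⟩ | ⟨a', b', d'⟩) h
    · simp only [par] at h
      have := quad 0 (a - a') (b - b') (by
        simp only [map_zero, map_sub]
        linear_combination h)
      have h1 : a = a' := Units.ext (sub_eq_zero.1 this.2.1)
      have h2 : b = b' := sub_eq_zero.1 this.2.2
      rw [h1, h2]
    · exact absurd h (aux _ _ _ _ _)
    · exact absurd h.symm (aux _ _ _ _ _)
    · simp only [par] at h
      have h1 := hlin d
      have h2 := hlin d'
      field_simp at h
      have := quad (a - a') ((a - a') * (d + d') + b - b') ((a - a') * d * d' + b * d' - b' * d) (by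
        simp only [map_add, map_sub, map_mul]
        linear_combination h)
      obtain ⟨e1, e2, e3⟩ := this
      rw [e1] at e2 e3
      have hb : b = b' := Units.ext (by linear_combination e2)
      have ha : a = a' := sub_eq_zero.1 e1
      subst hb
      have hd : d = d' := by
        have : (b : F) * (d' - d) = 0 := by linear_combination e3
        have := (mul_eq_zero.1 this).resolve_left b.ne_zero
        exact (sub_eq_zero.1 this).symm
      rw [ha, hd]
  have hrange : ∀ z : K, z ∈ Set.range (par F y) ↔
      (z ∉ Set.range (algebraMap F K) ∧ ∃ u ∈ Wy F y, ∃ v ∈ Wy F y, u ≠ 0 ∧ z = v / u) := by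
    intro z
    constructor
    · rintro ⟨(⟨a, b⟩ | ⟨a, b, d⟩), rfl⟩
      · refine ⟨?_, 1, (mem_Wy _ _).2 ⟨0, 1, by simp⟩, _, (mem_Wy _ _).2 ⟨a, b, rfl⟩, one_ne_zero, by simp [par]⟩
        rintro ⟨f, hf⟩
        simp only [par] at hf
        have := quad 0 a (b - f) (by
          simp only [map_zero, map_sub]
          linear_combination -hf)
        exact a.ne_zero this.2.1
      · refine ⟨?_, _, (mem_Wy _ _).2 ⟨1, d, rfl⟩, _, (mem_Wy _ _).2 ⟨a, a * d + b, rfl⟩, ?_, ?_⟩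
        · rintro ⟨f, hf⟩
          simp only [par] at hf
          have h1 := hlin d
          field_simp at hf
          have := quad 0 (a - f) ((a - f) * d + b) (by
            simp only [map_zero, map_sub, map_add, map_mul]
            linear_combination -hf)
          obtain ⟨-, e1, e2⟩ := this
          rw [e1] at e2
          exact b.ne_zero (by linear_combination e2)
        · simpa using hlin d
        · have h1 := hlin d
          simp only [par, map_add, map_mul, map_one, one_mul]
          field_simp
          ring
    · rintro ⟨hz, u, hu, v, hv, hu0, rfl⟩
      obtain ⟨c, d, rfl⟩ := (mem_Wy _ _).1 hu
      obtain ⟨a, b, rfl⟩ := (mem_Wy _ _).1 hv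
      by_cases hc : c = 0
      · subst hc
        have hd : algebraMap F K d ≠ 0 := by simpa using hu0
        have hd' : d ≠ 0 := by rintro rfl; simp at hd
        have ha : a ≠ 0 := by
          rintro rfl
          exact hz ⟨b / d, by simp⟩
        refine ⟨Sum.inl (Units.mk0 (a / d) (div_ne_zero ha hd'), b / d), ?_⟩
        simp only [par, Units.val_mk0, map_div₀, map_zero, zero_mul, zero_add]
        field_simp
      · have hc' : algebraMap F K c ≠ 0 := by simpa using hc
        have h1 := hlin (d / c)
        have hne : (b - a * d / c) / c ≠ 0 := by
          intro h0
          apply hz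
          refine ⟨a / c, ?_⟩
          have hb : b = a * d / c := sub_eq_zero.1 ((div_eq_zero_iff.1 h0).resolve_right hc)
          rw [hb, eq_div_iff hu0]
          simp only [map_div₀, map_mul]
          field_simp
        refine ⟨Sum.inr (a / c, Units.mk0 _ hne, d / c), ?_⟩
        simp only [par, Units.val_mk0]
        rw [eq_div_iff hu0]
        simp only [map_div₀, map_sub, map_mul] at h1 ⊢
        have h2 : algebraMap F K c * y + algebraMap F K d = algebraMap F K c * (y + algebraMap F K d / algebraMap F K c) := by
          field_simp
        rw [h2]
        generalize hT : y + algebraMap F K d / algebraMap F K c = T at *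
        have hy' : y = T - algebraMap F K d / algebraMap F K c := by rw [← hT]; ring
        rw [hy']
        field_simp
        ring
  rw [← Nat.card_congr (Equiv.subtypeEquivRight hrange)]
  have := Nat.card_congr (Equiv.ofInjective _ hinj)
  rw [show Nat.card {z : K // z ∈ Set.range (par F y)} = Nat.card (Set.range (par F y)) from rfl, ← this]
  rw [Nat.card_sum, Nat.card_prod, Nat.card_prod, Nat.card_prod, Nat.card_eq_fintype_card, Nat.card_eq_fintype_card,
    Fintype.card_units]

end

/-- The action of `Kˣ` on the set of 2-dimensional `F`-subspaces of `K`, given by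
`x • W = {x·w : w ∈ W}`, has exactly `q + 1` orbits. -/
theorem stmt_0 (q : ℕ) (hodd : Odd q) (F K : Type*) [Field F] [Field K] [Algebra F K]
    [Fintype F] [Fintype K] (hq : Fintype.card F = q)
    (hK : Module.finrank F K = 4) :
    Nat.card (Quot (fun W W' : {W : Submodule F K // Module.finrank F W = 2} =>
      ∃ x : Kˣ, Submodule.map (LinearMap.mulLeft F (x : K)) W.1 = W'.1)) = q + 1 := by
  classical
  set R := (fun W W' : {W : Submodule F K // Module.finrank F W = 2} =>
      ∃ x : Kˣ, Submodule.map (LinearMap.mulLeft F (x : K)) W.1 = W'.1) with hR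
  have hequiv : Equivalence R := by
    refine ⟨fun W => ⟨1, by simp⟩, ?_, ?_⟩
    · rintro W W' ⟨x, hx⟩
      refine ⟨x⁻¹, ?_⟩
      rw [← hx, ← Submodule.map_comp, ← LinearMap.mulLeft_mul]
      simp
    · rintro W W' W'' ⟨x, hx⟩ ⟨x', hx'⟩
      refine ⟨x' * x, ?_⟩
      rw [← hx', ← hx, ← Submodule.map_comp, ← LinearMap.mulLeft_mul]
      simp
  obtain ⟨E, hE⟩ := exE hK
  have : Finite (Quot R) := inferInstance
  have : Fintype (Quot R) := Fintype.ofFinite _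
  let X := {y : K // y ∉ Set.range (algebraMap F K)}
  let c : X → Quot R := fun y => Quot.mk R ⟨Wy F y.1, finrank_Wy y.1 y.2⟩
  have hc : ∀ z y : X, c z = c y ↔ ∃ u ∈ Wy F y.1, ∃ v ∈ Wy F y.1, u ≠ 0 ∧ z.1 = v / u := by
    intro z y
    have h1 : c z = c y ↔ R ⟨Wy F z.1, finrank_Wy z.1 z.2⟩ ⟨Wy F y.1, finrank_Wy y.1 y.2⟩ :=
      (Quot.eq (r := R)).trans (hequiv.eqvGen_iff)
    rw [h1]
    constructor
    · rintro ⟨x, hx⟩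
      simp only at hx
      refine ⟨x, ?_, x * z.1, ?_, x.ne_zero, ?_⟩
      · rw [← hx]
        exact ⟨1, (mem_Wy _ _).2 ⟨0, 1, by simp⟩, by simp⟩
      · rw [← hx]
        exact ⟨z.1, (mem_Wy _ _).2 ⟨1, 0, by simp⟩, by simp⟩
      · field_simp [x.ne_zero]
    · rintro ⟨u, hu, v, hv, hu0, hz⟩
      refine ⟨Units.mk0 u hu0, map_eq _ hu0 _ _ ((finrank_Wy z.1 z.2).trans (finrank_Wy y.1 y.2).symm) ?_⟩
      intro w hw
      obtain ⟨a, b, rfl⟩ := (mem_Wy _ _).1 hw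
      have : u * (algebraMap F K a * z.1 + algebraMap F K b) = a • v + b • u := by
        rw [hz, Algebra.smul_def, Algebra.smul_def]
        field_simp
      refine this ▸ ?_
      exact Submodule.add_mem _ (Submodule.smul_mem _ _ hv) (Submodule.smul_mem _ _ hu)
  have hsurj : ∀ Q : Quot R, ∃ y : X, c y = Q := by
    intro Q
    obtain ⟨⟨W, hW⟩, rfl⟩ := Quot.exists_rep Q
    have hne : W ≠ ⊥ := by rintro rfl; simp at hW
    obtain ⟨u, hu, hu0⟩ := Submodule.exists_mem_ne_zero_of_ne_bot hne
    have : ∃ v ∈ W, v ∉ Submodule.span F {u} := by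
      by_contra! h
      have h1 := Submodule.finrank_mono (show W ≤ Submodule.span F {u} from h)
      rw [finrank_span_singleton hu0, hW] at h1
      omega
    obtain ⟨v, hv, hvu⟩ := this
    have hX : v / u ∉ Set.range (algebraMap F K) := by
      rintro ⟨f, hf⟩
      apply hvu
      rw [Submodule.mem_span_singleton]
      exact ⟨f, by rw [Algebra.smul_def, hf]; field_simp⟩
    refine ⟨⟨v / u, hX⟩, Quot.sound ⟨Units.mk0 u hu0, map_eq _ hu0 _ _ ((finrank_Wy _ hX).trans hW.symm) ?_⟩⟩
    intro w hw
    obtain ⟨a, b, rfl⟩ := (mem_Wy _ _).1 hw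
    have : u * (algebraMap F K a * (v / u) + algebraMap F K b) = a • v + b • u := by
      rw [Algebra.smul_def, Algebra.smul_def]
      field_simp
    refine this ▸ ?_
    exact Submodule.add_mem _ (Submodule.smul_mem _ _ hv) (Submodule.smul_mem _ _ hu)
  -- the elements of `E`
  have hWE : ∀ y : X, y.1 ∈ E → Wy F y.1 = E.toSubalgebra.toSubmodule := by
    intro y hy
    apply Submodule.eq_of_le_of_finrank_eq
    · intro w hw
      obtain ⟨a, b, rfl⟩ := (mem_Wy _ _).1 hw
      exact E.add_mem (E.mul_mem (E.algebraMap_mem a) hy) (E.algebraMap_mem b)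
    · rw [finrank_Wy y.1 y.2]; exact hE.symm
  have hcE : ∀ z y : X, y.1 ∈ E → (c z = c y ↔ z.1 ∈ E) := by
    intro z y hy
    rw [hc, hWE y hy]
    constructor
    · rintro ⟨u, hu, v, hv, -, h⟩
      rw [h]
      exact E.div_mem hv hu
    · intro h
      exact ⟨1, E.one_mem, z.1, h, one_ne_zero, by simp⟩
  have hcardF : Nat.card (Set.range (algebraMap F K)) = q := by
    rw [← Nat.card_congr (Equiv.ofInjective _ (algebraMap F K).injective), Nat.card_eq_fintype_card, hq]
  have hq1 : 1 < q := hq ▸ Fintype.one_lt_card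
  have hcardK : Nat.card K = q ^ 4 := by
    rw [Nat.card_eq_fintype_card, card_eq_pow_finrank (K := F), hK, hq]
  have hcardE : Nat.card E = q ^ 2 := by
    have : Fintype E := Fintype.ofFinite E
    rw [Nat.card_eq_fintype_card, card_eq_pow_finrank (K := F), hE, hq]
  have hcardX : Fintype.card X + q = q ^ 4 := by
    have h := Fintype.card_congr (Equiv.sumCompl (fun y : K => y ∈ Set.range (algebraMap F K)))
    rw [Fintype.card_sum, ← Nat.card_eq_fintype_card, ← Nat.card_eq_fintype_card (α := K), hcardK] at h
    have h' : Nat.card {y : K // y ∈ Set.range (algebraMap F K)} = q := hcardF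
    rw [h'] at h
    rw [← h, add_comm]
  have hcardEX : Nat.card {y : X // y.1 ∈ E} + q = q ^ 2 := by
    have hsub : Set.range (algebraMap F K) ⊆ (E : Set K) := by
      rintro _ ⟨f, rfl⟩; exact E.algebraMap_mem f
    have h1 : Nat.card {y : X // y.1 ∈ E} = ((E : Set K) \ Set.range (algebraMap F K)).ncard := by
      rw [← Nat.card_coe_set_eq]
      exact Nat.card_congr ((Equiv.subtypeSubtypeEquivSubtypeInter _ (fun y => y ∈ E)).trans
        (Equiv.subtypeEquivRight (fun y => by simp [and_comm])))
    rw [h1, ← hcardE, ← hcardF, Nat.card_coe_set_eq]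
    rw [Set.ncard_sdiff_add_ncard_of_subset hsub (Set.toFinite _)]
    exact (Nat.card_coe_set_eq (E : Set K)).symm
  have hfib : ∀ y : X, y.1 ∉ E → Nat.card {z : X // c z = c y} = (q - 1) * q + q * ((q - 1) * q) := by
    intro y hy
    rw [← hq, ← card_par E hE y.1 hy]
    refine Nat.card_congr ((Equiv.subtypeEquivRight (fun z => hc z y)).trans
      (Equiv.subtypeSubtypeEquivSubtypeInter _ (fun z => ∃ u ∈ Wy F y.1, ∃ v ∈ Wy F y.1, u ≠ 0 ∧ z = v / u)))
  have hex : ∃ y0 : X, y0.1 ∈ E := by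
    by_contra! h
    have : IsEmpty {y : X // y.1 ∈ E} := ⟨fun y => h y.1 y.2⟩
    rw [Nat.card_of_isEmpty] at hcardEX
    nlinarith
  obtain ⟨y0, hy0⟩ := hex
  have hfib0 : Nat.card {z : X // c z = c y0} + q = q ^ 2 := by
    rw [← hcardEX]
    congr 1
    exact Nat.card_congr (Equiv.subtypeEquivRight (fun z => hcE z y0 hy0))
  have hsum : Fintype.card X = ∑ Q : Quot R, Nat.card {z : X // c z = Q} := by
    rw [← Nat.card_eq_fintype_card, ← Nat.card_congr (Equiv.sigmaFiberEquiv c), Nat.card_sigma]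
  rw [← Finset.add_sum_erase _ _ (Finset.mem_univ (c y0))] at hsum
  rw [Finset.sum_congr rfl (g := fun _ => (q - 1) * q + q * ((q - 1) * q))] at hsum
  · rw [Finset.sum_const, Finset.card_erase_of_mem (Finset.mem_univ _), Finset.card_univ, smul_eq_mul] at hsum
    rw [Nat.card_eq_fintype_card]
    have hpos : 0 < Fintype.card (Quot R) := Fintype.card_pos_iff.2 ⟨c y0⟩
    obtain ⟨m, hm⟩ := Nat.exists_eq_succ_of_ne_zero hpos.ne'
    obtain ⟨r, rfl⟩ : ∃ r, q = r + 1 := ⟨q - 1, by omega⟩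
    rw [hm] at hsum ⊢
    simp only [Nat.succ_eq_add_one, Nat.add_sub_cancel] at hsum ⊢
    have hr : 0 < r := by omega
    have key : m * (r * (r+1) * (r + 2)) = (r + 1) * (r * (r+1) * (r + 2)) := by
      zify at *
      linear_combination hcardX - hsum - hfib0
    have := Nat.eq_of_mul_eq_mul_right (by positivity) key
    omega
  · intro Q hQ
    obtain ⟨y, rfl⟩ := hsurj Q
    apply hfib
    intro hy
    exact (Finset.mem_erase.1 hQ).1 ((hcE y y0 hy0).2 hy)
end

section
/- For every y ∈ E \ F, the stabilizer {x ∈ Kˣ : x • W_y = W_y} of the subspace W_y under the action of Kˣ equals Eˣ, i.e. equals {x ∈ Kˣ : x ∈ E}. -/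
/-- For every `y ∈ E \ F`, the stabilizer of `W_y = span F {1, y}` under the action of `Kˣ`
equals `Eˣ`, i.e. equals `{x ∈ Kˣ : x ∈ E}`. -/
theorem stmt_1 (q : ℕ) (hodd : Odd q) (F K : Type*) [Field F] [Field K] [Algebra F K]
    [Fintype F] [Fintype K] (hq : Fintype.card F = q)
    (hK : Module.finrank F K = 4)
    (E : IntermediateField F K) (hE : Module.finrank F E = 2)
    (y : K) (hyE : y ∈ E) (hyF : y ∉ Set.range (algebraMap F K)) :
    {x : Kˣ | Submodule.map (LinearMap.mulLeft F (x : K)) (Submodule.span F {1, y}) =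
      Submodule.span F {1, y}} = {x : Kˣ | (x : K) ∈ E} := by
  have hfin : FiniteDimensional F K := FiniteDimensional.of_finrank_pos (by omega)
  have hli : LinearIndependent F ![(1 : K), y] := by
    rw [LinearIndependent.pair_iff' one_ne_zero]
    intro a ha
    exact hyF ⟨a, by rw [← ha, Algebra.algebraMap_eq_smul_one]⟩
  have hr : Module.finrank F (Submodule.span F {1, y} : Submodule F K) = 2 := by
    have h := finrank_span_eq_card hli
    have e : Set.range ![(1 : K), y] = {1, y} := by
      ext z
      simp [eq_comm, or_comm]
    rw [e] at h
    simpa using h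
  have hle : (Submodule.span F {1, y} : Submodule F K) ≤ Subalgebra.toSubmodule E.toSubalgebra := by
    rw [Submodule.span_le]
    rintro z (rfl | rfl)
    · exact E.one_mem
    · exact hyE
  have hW : (Submodule.span F {1, y} : Submodule F K) = Subalgebra.toSubmodule E.toSubalgebra :=
    Submodule.eq_of_le_of_finrank_eq hle (hr.trans hE.symm)
  have hm : ∀ z : K, z ∈ Subalgebra.toSubmodule E.toSubalgebra ↔ z ∈ E := fun z => Iff.rfl
  rw [hW]
  ext x
  simp only [Set.mem_ofPred_eq]
  constructor
  · intro h
    rw [← hm, ← h]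
    exact ⟨1, E.one_mem, by simp⟩
  · intro hx
    ext z
    rw [Submodule.mem_map, hm]
    constructor
    · rintro ⟨w, hw, rfl⟩
      exact E.mul_mem hx hw
    · intro hz
      exact ⟨(x : K)⁻¹ * z, E.mul_mem (E.inv_mem hx) hz, by simp⟩
end

section
/- For every y ∈ K \ E, the stabilizer {x ∈ Kˣ : x • W_y = W_y} of the subspace W_y under the action of Kˣ equals Fˣ, i.e. equals {x ∈ Kˣ : x ∈ F}. -/
theorem aux_mem {F K : Type*} [Field F] [Field K] [Algebra F K]
    [Fintype F] [Fintype K] (E : IntermediateField F K) (hE : Module.finrank F E = 2)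
    (y : K) (c d : F) (h : y ^ 2 = algebraMap F K c + algebraMap F K d * y) : y ∈ E := by
  classical
  have hint : IsIntegral F y := Algebra.IsIntegral.isIntegral y
  have hdeg : Module.finrank F (IntermediateField.adjoin F {y}) ≤ 2 := by
    rw [IntermediateField.adjoin.finrank hint]
    have hp : (Polynomial.X ^ 2 + (-Polynomial.C d * Polynomial.X + -Polynomial.C c) :
      Polynomial F).natDegree = 2 := by compute_degree!
    have hm : (Polynomial.X ^ 2 + (-Polynomial.C d * Polynomial.X + -Polynomial.C c) :
      Polynomial F) ≠ 0 := by
      intro h0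
      rw [h0] at hp
      simp at hp
    rw [← hp]
    apply Polynomial.natDegree_le_of_dvd _ hm
    apply minpoly.dvd
    simp [h]
  have hpos : 0 < Module.finrank F (IntermediateField.adjoin F {y}) := Module.finrank_pos
  have hy : y ^ (Fintype.card F ^ 2) = y := by
    have h1 : (⟨y, IntermediateField.mem_adjoin_simple_self F y⟩ :
        IntermediateField.adjoin F {y}) ^ Fintype.card (IntermediateField.adjoin F {y}) = _ :=
      FiniteField.pow_card _
    rw [Module.card_eq_pow_finrank (K := F)] at h1
    have h2 := congrArg (fun z : IntermediateField.adjoin F {y} => (z : K)) h1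
    simp only [SubmonoidClass.mk_pow] at h2
    generalize Module.finrank F (IntermediateField.adjoin F {y}) = n at *
    interval_cases n
    · rw [pow_one] at h2
      rw [pow_two, pow_mul, h2, h2]
    · exact h2
  have hc : Fintype.card E = Fintype.card F ^ 2 := by
    rw [Module.card_eq_pow_finrank (K := F) (V := E), hE]
  have hq : 1 < Fintype.card F ^ 2 := hc ▸ Fintype.one_lt_card
  by_contra hyE
  have hne := FiniteField.X_pow_card_sub_X_ne_zero K hq
  have hsub : insert y (Finset.univ.image (fun e : E => (e : K))) ⊆
      (Polynomial.X ^ (Fintype.card F ^ 2) - Polynomial.X : Polynomial K).roots.toFinset := by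
    intro z hz
    rw [Multiset.mem_toFinset, Polynomial.mem_roots hne]
    rw [Finset.mem_insert] at hz
    rcases hz with rfl | hz
    · simp [hy]
    · obtain ⟨e, -, rfl⟩ := Finset.mem_image.1 hz
      have := congrArg (fun z : E => (z : K)) (FiniteField.pow_card e)
      rw [hc] at this
      simp only [SubmonoidClass.coe_pow] at this
      simp [this]
  have h1 := Finset.card_le_card hsub
  rw [Finset.card_insert_of_notMem (by simpa using hyE),
    Finset.card_image_of_injective _ Subtype.val_injective, Finset.card_univ, hc] at h1
  have h2 := (Multiset.toFinset_card_le _).trans (Polynomial.card_roots'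
    (Polynomial.X ^ (Fintype.card F ^ 2) - Polynomial.X : Polynomial K))
  rw [FiniteField.X_pow_card_sub_X_natDegree_eq K hq] at h2
  omega


/-- For every `y ∈ K \ E`, the stabilizer of `W_y = span F {1, y}` under the action of `Kˣ`
equals `Fˣ`, i.e. equals `{x ∈ Kˣ : x ∈ F}`. -/
theorem stmt_2 (q : ℕ) (hodd : Odd q) (F K : Type*) [Field F] [Field K] [Algebra F K]
    [Fintype F] [Fintype K] (hq : Fintype.card F = q)
    (hK : Module.finrank F K = 4)
    (E : IntermediateField F K) (hE : Module.finrank F E = 2)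
    (y : K) (hyE : y ∉ E) :
    {x : Kˣ | Submodule.map (LinearMap.mulLeft F (x : K)) (Submodule.span F {1, y}) =
      Submodule.span F {1, y}} = {x : Kˣ | (x : K) ∈ Set.range (algebraMap F K)} := by

  ext x
  simp only [Set.mem_setOf_eq]
  constructor
  · intro h
    have h1 : (x : K) * 1 ∈ Submodule.span F {1, y} := by
      rw [← h]
      exact Submodule.mem_map_of_mem (f := LinearMap.mulLeft F (x : K))
        (Submodule.subset_span (by simp))
    have h2 : (x : K) * y ∈ Submodule.span F {1, y} := by
      rw [← h]
      exact Submodule.mem_map_of_mem (f := LinearMap.mulLeft F (x : K))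
        (Submodule.subset_span (by simp))
    obtain ⟨a, b, hab⟩ := Submodule.mem_span_pair.1 h1
    obtain ⟨c, d, hcd⟩ := Submodule.mem_span_pair.1 h2
    simp only [Algebra.smul_def, mul_one] at hab hcd
    by_cases hb : b = 0
    · exact ⟨a, by simpa [hb] using hab⟩
    · exfalso
      apply hyE
      apply aux_mem E hE y (c / b) ((d - a) / b)
      have hb' : algebraMap F K b ≠ 0 := by simpa using hb
      rw [← hab] at hcd
      simp only [map_div₀, map_sub]
      field_simp
      linear_combination -hcd
  · rintro ⟨a, ha⟩
    have ha0 : a ≠ 0 := by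
      rintro rfl
      exact x.ne_zero (by simpa using ha.symm)
    have : LinearMap.mulLeft F (x : K) = a • LinearMap.id := by
      ext z
      simp [← ha, Algebra.smul_def]
    rw [this, Submodule.map_smul _ _ _ ha0, Submodule.map_id]
end

section
/- For y, y' ∈ K \ F, the subspaces W_y and W_{y'} lie in the same Kˣ-orbit (i.e. there exists x ∈ Kˣ with x • W_y = W_{y'}) if and only if there exist p, r, s, t ∈ F with p·t − r·s ≠ 0 such that y'·(s·y + t) = p·y + r (the element s·y + t being automatically nonzero since y ∉ F). -/
/-- For `y, y' ∈ K \ F`, the subspaces `W_y` and `W_{y'}` lie in the same `Kˣ`-orbit iff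
there exist `p, r, s, t ∈ F` with `p·t − r·s ≠ 0` such that `y'·(s·y + t) = p·y + r`. -/
theorem stmt_3 (q : ℕ) (hodd : Odd q) (F K : Type*) [Field F] [Field K] [Algebra F K]
    [Fintype F] [Fintype K] (hq : Fintype.card F = q)
    (hK : Module.finrank F K = 4)
    (y y' : K) (hy : y ∉ Set.range (algebraMap F K)) (hy' : y' ∉ Set.range (algebraMap F K)) :
    (∃ x : Kˣ, Submodule.map (LinearMap.mulLeft F (x : K)) (Submodule.span F {1, y}) =
        Submodule.span F {1, y'}) ↔
      ∃ p r s t : F, p * t - r * s ≠ 0 ∧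
        y' * (algebraMap F K s * y + algebraMap F K t) = algebraMap F K p * y + algebraMap F K r := by
  constructor
  · rintro ⟨x, hx⟩
    have h1 : (1 : K) ∈ Submodule.span F {1, y'} := Submodule.subset_span (by simp)
    have h2 : y' ∈ Submodule.span F {1, y'} := Submodule.subset_span (by simp)
    rw [← hx] at h1 h2
    obtain ⟨w, hw, hw1⟩ := h1
    obtain ⟨v, hv, hv1⟩ := h2
    obtain ⟨t, s, rfl⟩ := Submodule.mem_span_pair.1 hw
    obtain ⟨r, p, rfl⟩ := Submodule.mem_span_pair.1 hv
    simp only [LinearMap.mulLeft_apply, Algebra.smul_def, mul_one] at hw1 hv1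
    have key : y' * (algebraMap F K s * y + algebraMap F K t) =
        algebraMap F K p * y + algebraMap F K r := by
      linear_combination (algebraMap F K r + algebraMap F K p * y) * hw1 -
        (algebraMap F K s * y + algebraMap F K t) * hv1
    have hw0 : algebraMap F K s * y + algebraMap F K t ≠ 0 := by
      intro h
      rw [add_comm] at h
      rw [h] at hw1
      simp at hw1
    refine ⟨p, r, s, t, ?_, key⟩
    intro hD
    apply hy'
    have fin : ∀ c : F, p = c * s → r = c * t → y' ∈ Set.range (algebraMap F K) := by
      rintro c rfl rfl
      refine ⟨c, ?_⟩
      apply mul_right_cancel₀ hw0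
      rw [key]
      simp only [map_mul]
      ring
    by_cases hs : s = 0
    · subst hs
      have ht : t ≠ 0 := by
        rintro rfl
        simp at hw0
      have hp : p = 0 := by simpa [ht] using hD
      exact fin (r / t) (by simp [hp]) (by field_simp)
    · refine fin (p / s) (by field_simp) ?_
      field_simp
      linear_combination -hD
  · rintro ⟨p, r, s, t, hD, key⟩
    have hw0 : algebraMap F K s * y + algebraMap F K t ≠ 0 := by
      intro h
      by_cases hs : s = 0
      · subst hs
        have ht : t = 0 := by simpa using h
        simp [ht] at hD
      · apply hy
        have hs' : algebraMap F K s ≠ 0 := by simpa using hs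
        refine ⟨-t / s, ?_⟩
        rw [map_div₀, map_neg]
        field_simp
        linear_combination -h
    have hD' : algebraMap F K p * algebraMap F K t - algebraMap F K r * algebraMap F K s ≠ 0 := by
      rw [← map_mul, ← map_mul, ← map_sub]
      exact (map_ne_zero (algebraMap F K)).2 hD
    refine ⟨(Units.mk0 _ hw0)⁻¹, ?_⟩
    rw [Submodule.map_span, Set.image_pair]
    simp only [LinearMap.mulLeft_apply, Units.val_inv_eq_inv_val, Units.val_mk0, mul_one]
    have hy2 := eq_div_of_mul_eq hw0 key
    apply le_antisymm
    · rw [Submodule.span_le]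
      rintro z (rfl | rfl)
      · refine Submodule.mem_span_pair.2 ⟨p / (p * t - r * s), -s / (p * t - r * s), ?_⟩
        simp only [Algebra.smul_def, map_div₀, map_sub, map_mul, map_neg]
        rw [hy2]
        field_simp
        ring
      · refine Submodule.mem_span_pair.2 ⟨-r / (p * t - r * s), t / (p * t - r * s), ?_⟩
        simp only [Algebra.smul_def, map_div₀, map_sub, map_mul, map_neg]
        rw [hy2]
        field_simp
        ring
    · rw [Submodule.span_le]
      rintro z (rfl | rfl)
      · refine Submodule.mem_span_pair.2 ⟨t, s, ?_⟩
        simp only [Algebra.smul_def]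
        field_simp
        ring
      · refine Submodule.mem_span_pair.2 ⟨r, p, ?_⟩
        simp only [Algebra.smul_def]
        rw [hy2]
        field_simp
        ring
end

section
/- For every w ∈ Fq there exist u, v ∈ Fq such that u²·(w·(1 + 2a·w)) − u·v·(1 − w²·(3a² + b²α)) − v²·(2a + w·(3a² + b²α)) + (1 + 2a·w + (a² − b²α)·w²) = 0. -/
/-- For every `w ∈ Fq` there exist `u, v ∈ Fq` such that
`u²·(w·(1 + 2a·w)) − u·v·(1 − w²·(3a² + b²α)) − v²·(2a + w·(3a² + b²α))
  + (1 + 2a·w + (a² − b²α)·w²) = 0`. -/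
theorem stmt_4 (q : ℕ) (hodd : Odd q) (Fq : Type*) [Field Fq] [Fintype Fq]
    (hq : Fintype.card Fq = q)
    (a b α : Fq) (hα : ¬∃ x : Fq, x ^ 2 = α)
    (hab : ¬∃ x : Fq, x ^ 2 = a ^ 2 - b ^ 2 * α) :
    ∀ w : Fq, ∃ u v : Fq,
      u ^ 2 * (w * (1 + 2 * a * w)) - u * v * (1 - w ^ 2 * (3 * a ^ 2 + b ^ 2 * α)) -
          v ^ 2 * (2 * a + w * (3 * a ^ 2 + b ^ 2 * α)) +
          (1 + 2 * a * w + (a ^ 2 - b ^ 2 * α) * w ^ 2) = 0 := by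
  intro w
  have hs : (1 + 2 * a * w) + w * (2 * a + w * (3 * a ^ 2 + b ^ 2 * α)) ≠ 0 := by
    intro h
    by_cases hw : w = 0
    · subst hw
      simp at h
    · apply hab
      refine ⟨(1 + 2 * a * w) / w, ?_⟩
      rw [div_pow, div_eq_iff (pow_ne_zero 2 hw)]
      linear_combination h
  obtain ⟨s, hsd⟩ : ∃ s, s = (1 + 2 * a * w) + w * (2 * a + w * (3 * a ^ 2 + b ^ 2 * α)) :=
    ⟨_, rfl⟩
  obtain ⟨k, hk⟩ : ∃ k, k = 1 + 2 * a * w + (a ^ 2 - b ^ 2 * α) * w ^ 2 := ⟨_, rfl⟩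
  obtain ⟨c, hc⟩ : ∃ c, c = 2 * a + w * (3 * a ^ 2 + b ^ 2 * α) := ⟨_, rfl⟩
  rw [← hsd] at hs
  refine ⟨(c - k) / s, (-w * k - (1 + 2 * a * w)) / s, ?_⟩
  have h1 : w * ((c - k) / s) - (-w * k - (1 + 2 * a * w)) / s = 1 := by
    field_simp
    rw [hsd, hc]
    ring
  have h2 : (1 + 2 * a * w) * ((c - k) / s) + c * ((-w * k - (1 + 2 * a * w)) / s) = -k := by
    field_simp
    rw [hsd, hc]
    ring
  generalize (c - k) / s = u at *
  generalize (-w * k - (1 + 2 * a * w)) / s = v at *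
  rw [← hk]
  subst hc
  linear_combination ((1 + 2 * a * w) * u + (2 * a + w * (3 * a ^ 2 + b ^ 2 * α)) * v) * h1 + h2
end

section
/- For all X, Y ∈ Fq with Y ≠ 0, there exist u, v ∈ Fq such that u²·X + u·v·(2a·X + Y) + v²·(2a·Y + X·(a² − b²α)) − Y = 0. -/
/-- For all `X, Y ∈ Fq` with `Y ≠ 0`, there exist `u, v ∈ Fq` such that
`u²·X + u·v·(2a·X + Y) + v²·(2a·Y + X·(a² − b²α)) − Y = 0`. -/
theorem stmt_5 (q : ℕ) (hodd : Odd q) (Fq : Type*) [Field Fq] [Fintype Fq]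
    (hq : Fintype.card Fq = q)
    (a b α : Fq) (hα : ¬∃ x : Fq, x ^ 2 = α)
    (hab : ¬∃ x : Fq, x ^ 2 = a ^ 2 - b ^ 2 * α) :
    ∀ X Y : Fq, Y ≠ 0 → ∃ u v : Fq,
      u ^ 2 * X + u * v * (2 * a * X + Y) + v ^ 2 * (2 * a * Y + X * (a ^ 2 - b ^ 2 * α)) - Y
        = 0 := by
  intro X Y hY
  have hcard : Fintype.card Fq % 2 = 1 := by rw [hq]; exact Nat.odd_iff.mp hodd
  have h2 : (2 : Fq) ≠ 0 := by
    apply Ring.two_ne_zero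
    intro h
    have := FiniteField.even_card_of_char_two h
    omega
  by_cases hX : X = 0
  · refine ⟨1 - 2 * a, 1, ?_⟩
    subst hX
    ring
  generalize hN : a ^ 2 - b ^ 2 * α = N at *
  have hD : (Y - 2 * a * X) ^ 2 - 4 * N * X ^ 2 ≠ 0 := by
    intro h
    apply hab
    refine ⟨(Y - 2 * a * X) / (2 * X), ?_⟩
    field_simp
    linear_combination h
  generalize hDD : (Y - 2 * a * X) ^ 2 - 4 * N * X ^ 2 = D at *
  obtain ⟨s, v, h⟩ := FiniteField.exists_root_sum_quadratic
    (f := Polynomial.C 1 * Polynomial.X ^ 2 + Polynomial.C 0 * Polynomial.X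
      + Polynomial.C (-(4 * X * Y)))
    (g := Polynomial.C (-D) * Polynomial.X ^ 2 + Polynomial.C 0 * Polynomial.X
      + Polynomial.C 0)
    (Polynomial.degree_quadratic one_ne_zero)
    (Polynomial.degree_quadratic (neg_ne_zero.mpr hD)) hcard
  simp only [Polynomial.eval_add, Polynomial.eval_mul, Polynomial.eval_C, Polynomial.eval_pow,
    Polynomial.eval_X] at h
  refine ⟨(s - (2 * a * X + Y) * v) / (2 * X), v, ?_⟩
  have h4 : (4 * X : Fq) ≠ 0 := by
    have : (4 : Fq) = 2 * 2 := by norm_num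
    rw [this]
    exact mul_ne_zero (mul_ne_zero h2 h2) hX
  apply (mul_right_inj' h4).mp
  obtain ⟨u, hu⟩ : ∃ u, u = (s - (2 * a * X + Y) * v) / (2 * X) := ⟨_, rfl⟩
  rw [← hu]
  have hs : s = 2 * X * u + (2 * a * X + Y) * v := by
    rw [hu]; field_simp; ring
  subst hDD
  rw [hs] at h
  linear_combination h
end

section
/- Let X, Y ∈ Fq with Y ≠ 0. If (u, v) and (u', v') are pairs in Fq × Fq such that u²·X + u·v·(2a·X + Y) + v²·(2a·Y + X·(a² − b²α)) − Y = 0 and u'²·X + u'·v'·(2a·X + Y) + v'²·(2a·Y + X·(a² − b²α)) − Y = 0, then C = 0, where C = u² − u'² + u·v·u'² − u²·u'·v' + 2a·(v²·u'² − u²·v'²) + 2a·(u·v − u'·v') + (3a² + b²α)·(u'·v'·v² − u·v·v'²) + (v² − v'²)·(a² − b²α). -/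
/-- If `(u, v)` and `(u', v')` both satisfy the determinant equation, then `C = 0`. -/
theorem stmt_6 (q : ℕ) (hodd : Odd q) (Fq : Type*) [Field Fq] [Fintype Fq]
    (hq : Fintype.card Fq = q)
    (a b α : Fq) (hα : ¬∃ x : Fq, x ^ 2 = α)
    (hab : ¬∃ x : Fq, x ^ 2 = a ^ 2 - b ^ 2 * α)
    (X Y : Fq) (hY : Y ≠ 0) (u v u' v' : Fq)
    (h1 : u ^ 2 * X + u * v * (2 * a * X + Y) +
        v ^ 2 * (2 * a * Y + X * (a ^ 2 - b ^ 2 * α)) - Y = 0)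
    (h2 : u' ^ 2 * X + u' * v' * (2 * a * X + Y) +
        v' ^ 2 * (2 * a * Y + X * (a ^ 2 - b ^ 2 * α)) - Y = 0) :
    u ^ 2 - u' ^ 2 + u * v * u' ^ 2 - u ^ 2 * u' * v' +
        2 * a * (v ^ 2 * u' ^ 2 - u ^ 2 * v' ^ 2) + 2 * a * (u * v - u' * v') +
        (3 * a ^ 2 + b ^ 2 * α) * (u' * v' * v ^ 2 - u * v * v' ^ 2) +
        (v ^ 2 - v' ^ 2) * (a ^ 2 - b ^ 2 * α) = 0 := by
  apply mul_left_cancel₀ hY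
  linear_combination (u' ^ 2 + 2 * a * u' * v' + (a ^ 2 - b ^ 2 * α) * v' ^ 2) * h1 -
    (u ^ 2 + 2 * a * u * v + (a ^ 2 - b ^ 2 * α) * v ^ 2) * h2
end

section
/- For all a₁, a₂, a₃ ∈ Fq with (a₂, a₃) ≠ (0, 0), the element M := 4a₁⁴·b²α − 4a₁²·(a³·a₃² + 2a²·a₂·a₃ + a·a₂² + 3a·a₃²·b²α + 2a₂·a₃·b²α) + (a₂² + a₃²·(3a² + b²α) + 4a·a₂·a₃)² is nonzero. -/
/-- For all `a₁, a₂, a₃ ∈ Fq` with `(a₂, a₃) ≠ (0, 0)`, the element `M` is nonzero. -/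
theorem stmt_8 (q : ℕ) (hodd : Odd q) (Fq : Type*) [Field Fq] [Fintype Fq]
    (hq : Fintype.card Fq = q)
    (a b α : Fq) (hα : ¬∃ x : Fq, x ^ 2 = α)
    (hab : ¬∃ x : Fq, x ^ 2 = a ^ 2 - b ^ 2 * α) :
    ∀ a₁ a₂ a₃ : Fq, (a₂, a₃) ≠ (0, 0) →
      4 * a₁ ^ 4 * b ^ 2 * α -
          4 * a₁ ^ 2 * (a ^ 3 * a₃ ^ 2 + 2 * a ^ 2 * a₂ * a₃ + a * a₂ ^ 2 +
            3 * a * a₃ ^ 2 * b ^ 2 * α + 2 * a₂ * a₃ * b ^ 2 * α) +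
          (a₂ ^ 2 + a₃ ^ 2 * (3 * a ^ 2 + b ^ 2 * α) + 4 * a * a₂ * a₃) ^ 2 ≠ 0 := by
  intro a₁ a₂ a₃ hne hM
  have key : ∀ c x y : Fq, (¬∃ z : Fq, z ^ 2 = c) → x ^ 2 = c * y ^ 2 → y = 0 := by
    intro c x y hc h
    by_contra hy
    apply hc
    refine ⟨x / y, ?_⟩
    rw [div_pow, h]
    field_simp
  have hb : b ≠ 0 := by
    rintro rfl
    exact hab ⟨a, by ring⟩
  have hW : (a₂ + a * a₃) ^ 2 - b ^ 2 * α * a₃ ^ 2 = 0 := by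
    apply key (a ^ 2 - b ^ 2 * α)
      (2 * (b ^ 2 * α) * a₁ ^ 2 - (a ^ 3 * a₃ ^ 2 + 2 * a ^ 2 * a₂ * a₃ + a * a₂ ^ 2 +
            3 * a * a₃ ^ 2 * b ^ 2 * α + 2 * a₂ * a₃ * b ^ 2 * α)) _ hab
    linear_combination (b ^ 2 * α) * hM
  have h3 : b * a₃ = 0 := by
    apply key α (a₂ + a * a₃) _ hα
    linear_combination hW
  have h3' : a₃ = 0 := by simpa [hb] using h3
  subst h3'
  have h2 : a₂ = 0 := by simpa using hW
  exact hne (by rw [h2])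
end

section
/- For every irreducible finite-dimensional complex representation (σ, V) of GL₂(Fq) and every group homomorphism θ : H → ℂˣ, the subspace {v ∈ V : σ(h)·v = θ(h)·v for all h ∈ H} of V has dimension at most 1. (In other words, the induced representation of any character of H to GL₂(Fq) is multiplicity free.) -/
theorem gelfand_aux {G : Type*} [Group G] [Finite G] (H : Subgroup G)
    (t : G → G) (tmul : ∀ g h, t (g * h) = t h * t g) (tH : ∀ h ∈ H, t h = h)
    (tc : ∀ g, ∃ h ∈ H, h * g = t g * h)
    {V : Type*} [AddCommGroup V] [Module ℂ V] [FiniteDimensional ℂ V]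
    (σ : Representation ℂ G V)
    (hirr : ∀ W : Submodule ℂ V, (∀ g : G, ∀ v ∈ W, σ g v ∈ W) → W = ⊥ ∨ W = ⊤)
    (θ : H →* ℂˣ) (U : Submodule ℂ V)
    (hU : ∀ v : V, v ∈ U ↔ ∀ h : H, σ (h : G) v = (θ h : ℂ) • v) :
    Module.finrank ℂ U ≤ 1 := by
  classical
  have := Fintype.ofFinite H
  let e : V →ₗ[ℂ] V := ∑ h : H, ((θ h)⁻¹ : ℂ) • σ (h : G)
  have e_apply : ∀ v, e v = ∑ h : H, ((θ h)⁻¹ : ℂ) • σ (h : G) v := by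
    intro v
    simp [e, LinearMap.sum_apply]
  have hn : (Fintype.card H : ℂ) ≠ 0 := by
    exact_mod_cast Fintype.card_ne_zero
  have e_U : ∀ v ∈ U, e v = (Fintype.card H : ℂ) • v := by
    intro v hv
    rw [e_apply]
    have : ∀ h : H, ((θ h)⁻¹ : ℂ) • σ (h : G) v = v := by
      intro h
      rw [(hU v).1 hv h, smul_smul, inv_mul_cancel₀ (θ h).ne_zero, one_smul]
    simp [this, Nat.cast_smul_eq_nsmul]
  have e_mem : ∀ v, e v ∈ U := by
    intro v
    rw [hU]
    intro k
    rw [e_apply, map_sum, Finset.smul_sum]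
    refine Fintype.sum_equiv (Equiv.mulLeft k) _ _ ?_
    intro h
    simp only [Equiv.coe_mulLeft, map_mul, map_smul, Subgroup.coe_mul, Units.val_mul,
      Module.End.mul_apply, smul_smul]
    congr 1
    have := (θ k).ne_zero
    field_simp
  have e_right : ∀ (k : H) v, e (σ (k : G) v) = (θ k : ℂ) • e v := by
    intro k v
    rw [e_apply, e_apply, Finset.smul_sum]
    refine Fintype.sum_equiv (Equiv.mulRight k) _ _ ?_
    intro h
    simp only [Equiv.coe_mulRight, map_mul, map_smul, Subgroup.coe_mul, Units.val_mul,
      Module.End.mul_apply, smul_smul]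
    congr 1
    have := (θ k).ne_zero
    field_simp
  -- symmetry
  have e_t : ∀ g, ∀ v ∈ U, e (σ (t g) v) = e (σ g v) := by
    intro g v hv
    obtain ⟨h, hh, hc⟩ := tc g
    have h1 : e (σ (h * g) v) = e (σ (t g * h) v) := by rw [hc]
    rw [map_mul, map_mul, Module.End.mul_apply, Module.End.mul_apply, e_right ⟨h, hh⟩,
      (hU v).1 hv ⟨h, hh⟩, map_smul, map_smul] at h1
    exact (smul_right_injective V (θ ⟨h, hh⟩).ne_zero h1).symm
  have expand : ∀ g g' v, e (σ g (e (σ g' v))) =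
      ∑ h : H, ((θ h)⁻¹ : ℂ) • e (σ (g * h * g') v) := by
    intro g g' v
    rw [e_apply (σ g' v), map_sum, map_sum]
    simp [map_mul]
  have comm : ∀ g g', ∀ v ∈ U, e (σ g (e (σ g' v))) = e (σ g' (e (σ g v))) := by
    intro g g' v hv
    have h1 : e (σ g (e (σ g' v))) = e (σ (t g') (e (σ (t g) v))) := by
      rw [expand, expand]
      refine Finset.sum_congr rfl fun h _ => ?_
      rw [← e_t _ v hv, tmul, tmul, tH h h.2, mul_assoc]
    rw [h1, e_t _ _ (e_mem _), e_t _ _ hv]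
  -- spanning
  have span : ∀ v ∈ U, v ≠ 0 → ∀ P : Submodule ℂ V, (∀ g, e (σ g v) ∈ P) → U ≤ P := by
    intro v hv hv0 P hP w hw
    let W : Submodule ℂ V := Submodule.span ℂ (Set.range fun g => σ g v)
    have hW : W = ⊤ := by
      refine (hirr W ?_).resolve_left ?_
      · intro g x hx
        have : W ≤ W.comap (σ g) := by
          refine Submodule.span_le.2 ?_
          rintro _ ⟨k, rfl⟩
          refine Submodule.subset_span ⟨g * k, ?_⟩
          simp [map_mul]
        exact this hx
      · intro hb
        have : v ∈ W := Submodule.subset_span ⟨1, by simp⟩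
        rw [hb] at this
        exact hv0 ((Submodule.mem_bot ℂ).1 this)
    have hle : W ≤ P.comap e := by
      refine Submodule.span_le.2 ?_
      rintro _ ⟨k, rfl⟩
      exact hP k
    have hwW : w ∈ W := by rw [hW]; trivial
    have := hle hwW
    rw [Submodule.mem_comap, e_U w hw] at this
    exact (P.smul_mem_iff hn).1 this
  by_cases hbot : U = ⊥
  · subst hbot; simp
  have scal : ∀ g, ∃ c : ℂ, ∀ w ∈ U, e (σ g w) = c • w := by
    intro g
    have : Nontrivial U := Submodule.nontrivial_iff_ne_bot.2 hbot
    let T : Module.End ℂ U := ((e ∘ₗ σ g).restrict (p := U) (q := U) fun x _ => e_mem _)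
    obtain ⟨c, hc⟩ := Module.End.exists_eigenvalue T
    obtain ⟨v, hv⟩ := hc.exists_hasEigenvector
    have hv1 : e (σ g v) = c • (v : V) := congrArg Subtype.val hv.apply_eq_smul
    have hv0 : (v : V) ≠ 0 := fun h => hv.2 (Subtype.ext h)
    refine ⟨c, fun w hw => ?_⟩
    have := span v v.2 hv0 (LinearMap.ker (e ∘ₗ σ g - c • LinearMap.id)) ?_ hw
    · simpa [sub_eq_zero] using this
    · intro k
      simp only [LinearMap.mem_ker, LinearMap.sub_apply, LinearMap.comp_apply,
        LinearMap.smul_apply, LinearMap.id_apply]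
      rw [comm g k v v.2, hv1, map_smul, map_smul, sub_self]
  obtain ⟨v, hv, hv0⟩ := Submodule.exists_mem_ne_zero_of_ne_bot hbot
  have hle : U ≤ Submodule.span ℂ {v} := by
    refine span v hv hv0 _ fun g => ?_
    obtain ⟨c, hc⟩ := scal g
    rw [hc v hv]
    exact Submodule.smul_mem _ _ (Submodule.mem_span_singleton_self v)
  exact (Submodule.finrank_mono hle).trans (finrank_span_singleton hv0).le

/-- For every irreducible finite-dimensional complex representation `(σ, V)` of `GL₂(Fq)` and
every character `θ : H → ℂˣ` of the subgroup `H ≅ F_{q²}ˣ`, the subspace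
`{v ∈ V : σ(h)·v = θ(h)·v for all h ∈ H}` has dimension at most `1`. -/
theorem stmt_10 (q : ℕ) (hodd : Odd q) (Fq : Type*) [Field Fq] [Fintype Fq]
    (hq : Fintype.card Fq = q)
    (a b α : Fq) (hα : ¬∃ x : Fq, x ^ 2 = α)
    (hab : ¬∃ x : Fq, x ^ 2 = a ^ 2 - b ^ 2 * α)
    (H : Subgroup (GL (Fin 2) Fq))
    (hH : (H : Set (GL (Fin 2) Fq)) = {g : GL (Fin 2) Fq | ∃ x y : Fq, (x, y) ≠ (0, 0) ∧
      (g : Matrix (Fin 2) (Fin 2) Fq) = !![x, -(a ^ 2 - b ^ 2 * α) * y; y, x + 2 * a * y]})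
    (V : Type*) [AddCommGroup V] [Module ℂ V] [FiniteDimensional ℂ V] [Nontrivial V]
    (σ : Representation ℂ (GL (Fin 2) Fq) V)
    (hirr : ∀ W : Submodule ℂ V, (∀ g : GL (Fin 2) Fq, ∀ v ∈ W, σ g v ∈ W) → W = ⊥ ∨ W = ⊤)
    (θ : H →* ℂˣ)
    (Vθ : Submodule ℂ V)
    (hVθ : ∀ v : V, v ∈ Vθ ↔ ∀ h : H, σ (h : GL (Fin 2) Fq) v = (θ h : ℂ) • v) :
    Module.finrank ℂ Vθ ≤ 1 := by
  have hdet : ∀ x y : Fq, (x, y) ≠ (0, 0) →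
      (!![x, -(a ^ 2 - b ^ 2 * α) * y; y, x + 2 * a * y]).det ≠ 0 := by
    intro x y hxy h0
    rw [Matrix.det_fin_two_of] at h0
    have hb : b ≠ 0 := by
      rintro rfl
      exact hab ⟨a, by ring⟩
    by_cases hy : y = 0
    · subst hy
      have : x = 0 := by
        have : x * x = 0 := by linear_combination h0
        simpa using this
      exact hxy (by simp [this])
    · refine hα ⟨(x + a * y) / (b * y), ?_⟩
      field_simp
      linear_combination h0
  let N : GL (Fin 2) Fq → Matrix (Fin 2) (Fin 2) Fq := fun g =>
    !![g 1 1 - 2 * a * g 1 0,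
       g 0 1 - 2 * a * g 0 0 + 2 * a * (g 1 1 - 2 * a * g 1 0);
       g 1 0, g 0 0 + 2 * a * g 1 0]
  have hN : ∀ g, (N g).det ≠ 0 := by
    intro g h0
    have hg : (g : Matrix (Fin 2) (Fin 2) Fq).det ≠ 0 := g.det_ne_zero
    apply hg
    rw [Matrix.det_fin_two_of] at h0
    rw [Matrix.det_fin_two]
    linear_combination h0
  let t : GL (Fin 2) Fq → GL (Fin 2) Fq := fun g =>
    Matrix.GeneralLinearGroup.mkOfDetNeZero (N g) (hN g)
  have ht : ∀ g, (t g : Matrix (Fin 2) (Fin 2) Fq) = N g := fun g => rfl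
  have memH : ∀ g : GL (Fin 2) Fq, g ∈ H ↔ ∃ x y : Fq, (x, y) ≠ (0, 0) ∧
      (g : Matrix (Fin 2) (Fin 2) Fq) =
        !![x, -(a ^ 2 - b ^ 2 * α) * y; y, x + 2 * a * y] := by
    intro g
    rw [← SetLike.mem_coe, hH]
    rfl
  refine gelfand_aux H t ?_ ?_ ?_ σ hirr θ Vθ hVθ
  · intro g h
    apply Units.ext
    rw [Units.val_mul, ht, ht, ht]
    ext i j
    fin_cases i <;> fin_cases j <;>
      simp [N, Matrix.mul_apply, Fin.sum_univ_two] <;> ring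
  · intro h hh
    obtain ⟨x, y, -, hxy⟩ := (memH h).1 hh
    apply Units.ext
    rw [ht]
    simp only [N, hxy]
    ext i j
    fin_cases i <;> fin_cases j <;> simp <;> ring
  · intro g
    have key : ∀ u v : Fq, (u, v) ≠ (0, 0) →
        u * (g 0 0 - g 1 1 + 2 * a * g 1 0) = v * ((a ^ 2 - b ^ 2 * α) * g 1 0 +
          (g 0 1 - 2 * a * g 0 0 + 2 * a * (g 1 1 - 2 * a * g 1 0))) →
        ∃ h ∈ H, h * g = t g * h := by
      intro u v huv heq
      refine ⟨Matrix.GeneralLinearGroup.mkOfDetNeZero _ (hdet u v huv),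
        (memH _).2 ⟨u, v, huv, rfl⟩, ?_⟩
      apply Units.ext
      rw [Units.val_mul, Units.val_mul, ht]
      change !![u, -(a ^ 2 - b ^ 2 * α) * v; v, u + 2 * a * v] * _ =
        _ * !![u, -(a ^ 2 - b ^ 2 * α) * v; v, u + 2 * a * v]
      ext i j
      fin_cases i <;> fin_cases j <;>
        simp [N, Matrix.mul_apply, Fin.sum_univ_two]
      · linear_combination heq
      · linear_combination 2 * a * heq
      · ring
      · linear_combination -heq
    by_cases h0 : ((a ^ 2 - b ^ 2 * α) * g 1 0 +
          (g 0 1 - 2 * a * g 0 0 + 2 * a * (g 1 1 - 2 * a * g 1 0)),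
          g 0 0 - g 1 1 + 2 * a * g 1 0) = ((0 : Fq), (0 : Fq))
    · obtain ⟨h1, h2⟩ := Prod.mk.inj h0
      exact key 1 0 (by simp) (by rw [h1, h2]; ring)
    · exact key _ _ h0 (by ring)
end

section
/- The map (y, z) ↦ H·γ(y,z) is a bijection from Fq × Fqˣ onto the set of right cosets of H in GL₂(Fq); equivalently, every g ∈ GL₂(Fq) factors uniquely as g = h·γ(y,z) with h ∈ H, y ∈ Fq and z ∈ Fqˣ. -/
/-- Every `g ∈ GL₂(Fq)` factors uniquely as `g = h·γ(y,z)` with `h ∈ H`, `y ∈ Fq`, `z ∈ Fqˣ`;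
equivalently `(y, z) ↦ H·γ(y,z)` is a bijection onto the right cosets of `H`. -/
theorem stmt_12 (q : ℕ) (hodd : Odd q) (Fq : Type*) [Field Fq] [Fintype Fq]
    (hq : Fintype.card Fq = q)
    (a b α : Fq) (hα : ¬∃ x : Fq, x ^ 2 = α)
    (hab : ¬∃ x : Fq, x ^ 2 = a ^ 2 - b ^ 2 * α)
    (H : Subgroup (GL (Fin 2) Fq))
    (hH : (H : Set (GL (Fin 2) Fq)) = {g : GL (Fin 2) Fq | ∃ x y : Fq, (x, y) ≠ (0, 0) ∧
      (g : Matrix (Fin 2) (Fin 2) Fq) = !![x, -(a ^ 2 - b ^ 2 * α) * y; y, x + 2 * a * y]}) :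
    ∀ g : GL (Fin 2) Fq, ∃! p : H × Fq × Fqˣ,
      (g : Matrix (Fin 2) (Fin 2) Fq) =
        ((p.1 : GL (Fin 2) Fq) : Matrix (Fin 2) (Fin 2) Fq) * !![1, p.2.1; 0, (p.2.2 : Fq)] := by
  intro g
  have hb : b ≠ 0 := by
    rintro rfl
    exact hab ⟨a, by ring⟩
  have key : ∀ x y : Fq, (x, y) ≠ (0, 0) →
      x * (x + 2 * a * y) + (a ^ 2 - b ^ 2 * α) * y * y ≠ 0 := by
    intro x y hxy h0
    by_cases hy : y = 0
    · subst hy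
      apply hxy
      have : x * x = 0 := by linear_combination h0
      simpa using this
    · apply hα
      refine ⟨(x + a * y) / (b * y), ?_⟩
      rw [div_pow, div_eq_iff (pow_ne_zero 2 (mul_ne_zero hb hy))]
      linear_combination h0
  have hdet : (g : Matrix (Fin 2) (Fin 2) Fq).det ≠ 0 :=
    ((Matrix.isUnit_iff_isUnit_det _).1 g.isUnit).ne_zero
  rw [Matrix.det_fin_two] at hdet
  obtain ⟨x, hx⟩ : ∃ x, x = (g : Matrix (Fin 2) (Fin 2) Fq) 0 0 := ⟨_, rfl⟩
  obtain ⟨u, hu⟩ : ∃ x, x = (g : Matrix (Fin 2) (Fin 2) Fq) 0 1 := ⟨_, rfl⟩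
  obtain ⟨y, hy⟩ : ∃ x, x = (g : Matrix (Fin 2) (Fin 2) Fq) 1 0 := ⟨_, rfl⟩
  obtain ⟨v, hv⟩ : ∃ x, x = (g : Matrix (Fin 2) (Fin 2) Fq) 1 1 := ⟨_, rfl⟩
  have hg : (g : Matrix (Fin 2) (Fin 2) Fq) = !![x, u; y, v] := by
    rw [hx, hu, hy, hv]
    exact Matrix.eta_fin_two _
  rw [← hx, ← hu, ← hy, ← hv] at hdet
  have hxy : (x, y) ≠ (0, 0) := by
    intro h
    obtain ⟨h1, h2⟩ := Prod.mk.inj h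
    apply hdet
    rw [h1, h2]
    ring
  have hD := key x y hxy
  obtain ⟨D, hDd⟩ : ∃ D, D = x * (x + 2 * a * y) + (a ^ 2 - b ^ 2 * α) * y * y := ⟨_, rfl⟩
  rw [← hDd] at hD
  let h : GL (Fin 2) Fq := Matrix.GeneralLinearGroup.mkOfDetNeZero
    !![x, -(a ^ 2 - b ^ 2 * α) * y; y, x + 2 * a * y] (by
      rw [Matrix.det_fin_two_of]
      intro h0
      apply hD
      rw [hDd]
      linear_combination h0)
  have hh : (h : Matrix (Fin 2) (Fin 2) Fq) =
    !![x, -(a ^ 2 - b ^ 2 * α) * y; y, x + 2 * a * y] := rfl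
  have hmem : h ∈ H := by
    rw [← SetLike.mem_coe, hH]
    exact ⟨x, y, hxy, hh⟩
  have hz : (x * v - y * u) / D ≠ 0 := by
    apply div_ne_zero _ hD
    intro h0
    apply hdet
    linear_combination h0
  have hex : (g : Matrix (Fin 2) (Fin 2) Fq) = (h : Matrix (Fin 2) (Fin 2) Fq) *
      !![1, ((x + 2 * a * y) * u + (a ^ 2 - b ^ 2 * α) * y * v) / D; 0,
        (x * v - y * u) / D] := by
    rw [hg, hh, Matrix.mul_fin_two]
    congr 1
    ext i j
    fin_cases i <;> fin_cases j
    · simp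
    · simp
      field_simp
      rw [hDd]; ring
    · simp
    · simp
      field_simp
      rw [hDd]; ring
  refine ⟨(⟨h, hmem⟩, _, Units.mk0 _ hz), hex, ?_⟩
  rintro ⟨⟨k, hk⟩, s, t⟩ hp
  simp only at hp
  have hk' := hk
  rw [← SetLike.mem_coe, hH] at hk'
  obtain ⟨x', y', -, hkm⟩ := hk'
  have h2 := hp
  rw [hg, hkm, Matrix.mul_fin_two] at h2
  have e0 := congrFun (congrFun h2 0) 0
  have e1 := congrFun (congrFun h2 1) 0
  simp at e0 e1
  subst e0 e1
  have hkh : k = h := by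
    apply Units.ext
    rw [hkm, hh]
  subst hkh
  have h3 := h.isUnit.mul_left_cancel (hp.symm.trans hex)
  have f0 := congrFun (congrFun h3 0) 1
  have f1 := congrFun (congrFun h3 1) 1
  simp at f0 f1
  refine Prod.ext rfl (Prod.ext f0 (Units.ext f1))
end

section
/- For y, y' ∈ Fq and z, z' ∈ Fqˣ, the double cosets H·γ(y,z)·H and H·γ(y',z')·H in GL₂(Fq) coincide if and only if z'·(y² + 2a·y·(z − 1) + (1 + z²)·(a² − b²α)) = z·(y'² + 2a·y'·(z' − 1) + (1 + z'²)·(a² − b²α)). -/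
lemma aux_det {F : Type*} [Field F] (a b α : F) (hα : ¬∃ x : F, x ^ 2 = α)
    (hab : ¬∃ x : F, x ^ 2 = a ^ 2 - b ^ 2 * α) (x y : F) (h : (x, y) ≠ (0, 0)) :
    (!![x, -(a ^ 2 - b ^ 2 * α) * y; y, x + 2 * a * y] : Matrix (Fin 2) (Fin 2) F).det ≠ 0 := by
  rw [Matrix.det_fin_two_of]
  intro h0
  have hb : b ≠ 0 := by
    rintro rfl
    exact hab ⟨a, by ring⟩
  by_cases hy : y = 0
  · subst hy
    apply h
    have : x * x = 0 := by linear_combination h0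
    simpa using this
  · apply hα
    refine ⟨(x + a * y) / (b * y), ?_⟩
    field_simp
    linear_combination h0

lemma aux_ker {F : Type*} [Field F] (p q r s : F) (h : p * s - q * r = 0) :
    ∃ x y : F, (x, y) ≠ (0, 0) ∧ x * p + y * q = 0 ∧ x * r + y * s = 0 := by
  by_cases h1 : (q, -p) = (0, 0)
  · by_cases h2 : (s, -r) = (0, 0)
    · simp only [Prod.mk.injEq, neg_eq_zero] at h1 h2
      exact ⟨1, 0, by simp, by simp [h1], by simp [h2]⟩
    · exact ⟨s, -r, h2, by linear_combination h, by ring⟩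
  · exact ⟨q, -p, h1, by ring, by linear_combination -h⟩

lemma aux_ker' {F : Type*} [Field F] (p q r s x y : F) (hxy : (x, y) ≠ (0, 0))
    (h1 : x * p + y * q = 0) (h2 : x * r + y * s = 0) : p * s - q * r = 0 := by
  by_cases hx : x = 0
  · have hy : y ≠ 0 := by
      rintro rfl
      exact hxy (by simp [hx])
    apply mul_left_cancel₀ hy
    linear_combination -r * h1 + p * h2
  · apply mul_left_cancel₀ hx
    linear_combination s * h1 - q * h2

/-- The double cosets `H·γ(y,z)·H` and `H·γ(y',z')·H` coincide iff
`z'·(y² + 2a·y·(z − 1) + (1 + z²)·(a² − b²α)) = z·(y'² + 2a·y'·(z' − 1) + (1 + z'²)·(a² − b²α))`. -/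
theorem stmt_13 (q : ℕ) (hodd : Odd q) (Fq : Type*) [Field Fq] [Fintype Fq]
    (hq : Fintype.card Fq = q)
    (a b α : Fq) (hα : ¬∃ x : Fq, x ^ 2 = α)
    (hab : ¬∃ x : Fq, x ^ 2 = a ^ 2 - b ^ 2 * α)
    (H : Subgroup (GL (Fin 2) Fq))
    (hH : (H : Set (GL (Fin 2) Fq)) = {g : GL (Fin 2) Fq | ∃ x y : Fq, (x, y) ≠ (0, 0) ∧
      (g : Matrix (Fin 2) (Fin 2) Fq) = !![x, -(a ^ 2 - b ^ 2 * α) * y; y, x + 2 * a * y]})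
    (y y' : Fq) (z z' : Fqˣ) (γ γ' : GL (Fin 2) Fq)
    (hγ : (γ : Matrix (Fin 2) (Fin 2) Fq) = !![1, y; 0, (z : Fq)])
    (hγ' : (γ' : Matrix (Fin 2) (Fin 2) Fq) = !![1, y'; 0, (z' : Fq)]) :
    ({x | ∃ h₁ ∈ H, ∃ h₂ ∈ H, x = h₁ * γ * h₂} : Set (GL (Fin 2) Fq)) =
        {x | ∃ h₁ ∈ H, ∃ h₂ ∈ H, x = h₁ * γ' * h₂} ↔
      (z' : Fq) * (y ^ 2 + 2 * a * y * ((z : Fq) - 1) + (1 + (z : Fq) ^ 2) * (a ^ 2 - b ^ 2 * α)) =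
        (z : Fq) * (y' ^ 2 + 2 * a * y' * ((z' : Fq) - 1) +
          (1 + (z' : Fq) ^ 2) * (a ^ 2 - b ^ 2 * α)) := by
  have hmem : ∀ g : GL (Fin 2) Fq, g ∈ H ↔ ∃ x y : Fq, (x, y) ≠ (0, 0) ∧
      (g : Matrix (Fin 2) (Fin 2) Fq) = !![x, -(a ^ 2 - b ^ 2 * α) * y; y, x + 2 * a * y] := by
    intro g
    rw [← SetLike.mem_coe, hH]
    rfl
  have hz' : (z' : Fq) ≠ 0 := z'.ne_zero
  constructor
  · intro h
    have h1 : γ ∈ ({x | ∃ h₁ ∈ H, ∃ h₂ ∈ H, x = h₁ * γ * h₂} : Set (GL (Fin 2) Fq)) :=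
      ⟨1, H.one_mem, 1, H.one_mem, by simp⟩
    rw [h] at h1
    obtain ⟨h₁, hh₁, h₂, hh₂, he⟩ := h1
    have he2 : h₁⁻¹ * γ = γ' * h₂ := by rw [he]; group
    obtain ⟨x1, y1, -, e1⟩ := (hmem _).1 (H.inv_mem hh₁)
    obtain ⟨x2, y2, hne, e2⟩ := (hmem _).1 hh₂
    have he3 := congrArg (fun g : GL (Fin 2) Fq => (g : Matrix (Fin 2) (Fin 2) Fq)) he2
    simp only [Units.val_mul] at he3
    rw [e1, e2, hγ, hγ'] at he3
    have c00 := congrFun (congrFun he3 0) 0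
    have c01 := congrFun (congrFun he3 0) 1
    have c10 := congrFun (congrFun he3 1) 0
    have c11 := congrFun (congrFun he3 1) 1
    simp [Matrix.mul_apply, Fin.sum_univ_two] at c00 c01 c10 c11
    have := aux_ker' (y - y') (y * y' - (a ^ 2 - b ^ 2 * α) * (z * z' - 1) - 2 * a * y')
      (z - z') (z' * y + y' * z + 2 * a * z' * (z - 1)) x2 y2 hne
      (by rw [c00, c10] at c01; linear_combination c01)
      (by rw [c00, c10] at c11; linear_combination c11)
    linear_combination this
  · intro h
    obtain ⟨x2, y2, hne, k1, k2⟩ := aux_ker (y - y')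
      (y * y' - (a ^ 2 - b ^ 2 * α) * (z * z' - 1) - 2 * a * y')
      (z - z' : Fq) (z' * y + y' * z + 2 * a * z' * (z - 1)) (by linear_combination h)
    have hne1 : (x2 + y' * y2, (z' : Fq) * y2) ≠ (0, 0) := by
      intro h0
      simp only [Prod.mk.injEq, mul_eq_zero, hz', false_or] at h0
      obtain ⟨h0, h0'⟩ := h0
      subst h0'
      exact hne (by simpa using h0)
    let g1 := Matrix.GeneralLinearGroup.mkOfDetNeZero _ (aux_det a b α hα hab _ _ hne1)
    let g2 := Matrix.GeneralLinearGroup.mkOfDetNeZero _ (aux_det a b α hα hab _ _ hne)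
    have m1 : g1 ∈ H := (hmem _).2 ⟨_, _, hne1, rfl⟩
    have m2 : g2 ∈ H := (hmem _).2 ⟨_, _, hne, rfl⟩
    have key : g1 * γ = γ' * g2 := by
      apply Units.ext
      rw [Units.val_mul, Units.val_mul, hγ, hγ']
      change !![_, _; _, _] * _ = _ * !![_, _; _, _]
      rw [Matrix.mul_fin_two, Matrix.mul_fin_two]
      congr 1
      ext i j
      fin_cases i <;> fin_cases j <;> simp
      · linear_combination k1
      · linear_combination k2
    have key1 : γ = g1⁻¹ * γ' * g2 := by rw [mul_assoc, ← key]; group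
    have key2 : γ' = g1 * γ * g2⁻¹ := by rw [key]; group
    ext x
    constructor
    · rintro ⟨h₁, hh₁, h₂, hh₂, rfl⟩
      refine ⟨h₁ * g1⁻¹, H.mul_mem hh₁ (H.inv_mem m1), g2 * h₂, H.mul_mem m2 hh₂, ?_⟩
      rw [key1]; group
    · rintro ⟨h₁, hh₁, h₂, hh₂, rfl⟩
      refine ⟨h₁ * g1, H.mul_mem hh₁ m1, g2⁻¹ * h₂, H.mul_mem (H.inv_mem m2) hh₂, ?_⟩
      rw [key2]; group
end

section
/- Let T₁ = {diag(m, m') : m, m' ∈ Fqˣ} be the subgroup of invertible diagonal matrices in GL₂(Fq). The map y ↦ H·γ(y,1)·T₁ is a bijection from Fq onto the set of (H, T₁)-double cosets in GL₂(Fq). -/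
/-- The map `y ↦ H·γ(y,1)·T₁` is a bijection from `Fq` onto the set of `(H, T₁)`-double
cosets in `GL₂(Fq)`, where `T₁` is the diagonal torus. -/
theorem stmt_14 (q : ℕ) (hodd : Odd q) (Fq : Type*) [Field Fq] [Fintype Fq]
    (hq : Fintype.card Fq = q)
    (a b α : Fq) (hα : ¬∃ x : Fq, x ^ 2 = α)
    (hab : ¬∃ x : Fq, x ^ 2 = a ^ 2 - b ^ 2 * α)
    (H : Subgroup (GL (Fin 2) Fq))
    (hH : (H : Set (GL (Fin 2) Fq)) = {g : GL (Fin 2) Fq | ∃ x y : Fq, (x, y) ≠ (0, 0) ∧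
      (g : Matrix (Fin 2) (Fin 2) Fq) = !![x, -(a ^ 2 - b ^ 2 * α) * y; y, x + 2 * a * y]})
    (T₁ : Subgroup (GL (Fin 2) Fq))
    (hT₁ : (T₁ : Set (GL (Fin 2) Fq)) = {g : GL (Fin 2) Fq | ∃ m m' : Fqˣ,
      (g : Matrix (Fin 2) (Fin 2) Fq) = !![(m : Fq), 0; 0, (m' : Fq)]})
    (γ : Fq → GL (Fin 2) Fq)
    (hγ : ∀ y : Fq, ((γ y : Matrix (Fin 2) (Fin 2) Fq)) = !![1, y; 0, 1]) :
    Function.Bijective (fun y : Fq =>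
      (⟨{x | ∃ h ∈ H, ∃ t ∈ T₁, x = h * γ y * t},
        ⟨γ y, rfl⟩⟩ : {S : Set (GL (Fin 2) Fq) //
          ∃ g : GL (Fin 2) Fq, S = {x | ∃ h ∈ H, ∃ t ∈ T₁, x = h * g * t}})) := by
  have hH' : ∀ g : GL (Fin 2) Fq, g ∈ H ↔ ∃ x y : Fq, (x, y) ≠ (0, 0) ∧
      (g : Matrix (Fin 2) (Fin 2) Fq) = !![x, -(a ^ 2 - b ^ 2 * α) * y; y, x + 2 * a * y] := by
    intro g
    rw [← SetLike.mem_coe, hH]; rfl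
  have hT' : ∀ g : GL (Fin 2) Fq, g ∈ T₁ ↔ ∃ m m' : Fqˣ,
      (g : Matrix (Fin 2) (Fin 2) Fq) = !![(m : Fq), 0; 0, (m' : Fq)] := by
    intro g
    rw [← SetLike.mem_coe, hT₁]; rfl
  have hb : b ≠ 0 := by
    rintro rfl
    exact hab ⟨a, by ring⟩
  have hdet : ∀ x y : Fq, (x, y) ≠ (0, 0) →
      x * (x + 2 * a * y) + (a ^ 2 - b ^ 2 * α) * y * y ≠ 0 := by
    intro x y hxy h0
    by_cases hy : y = 0
    · subst hy
      apply hxy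
      have : x * x = 0 := by linear_combination h0
      simp [mul_self_eq_zero.mp this]
    · apply hα
      refine ⟨(x + a * y) / (b * y), ?_⟩
      field_simp
      linear_combination h0
  constructor
  · intro y₁ y₂ h
    have h1 : {x | ∃ h ∈ H, ∃ t ∈ T₁, x = h * γ y₁ * t} =
      {x | ∃ h ∈ H, ∃ t ∈ T₁, x = h * γ y₂ * t} := congrArg Subtype.val h
    have h2 : γ y₁ ∈ {x | ∃ h ∈ H, ∃ t ∈ T₁, x = h * γ y₁ * t} :=
      ⟨1, H.one_mem, 1, T₁.one_mem, by simp⟩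
    rw [h1] at h2
    obtain ⟨k, hk, t, ht, e⟩ := h2
    obtain ⟨x, z, hxz, hk⟩ := (hH' k).1 hk
    obtain ⟨m, m', ht⟩ := (hT' t).1 ht
    have e' := congrArg (fun g : GL (Fin 2) Fq => (g : Matrix (Fin 2) (Fin 2) Fq)) e
    simp only [Units.val_mul, hγ, hk, ht] at e'
    have e00 := congrFun (congrFun e' 0) 0
    have e01 := congrFun (congrFun e' 0) 1
    have e10 := congrFun (congrFun e' 1) 0
    have e11 := congrFun (congrFun e' 1) 1
    simp [Matrix.mul_apply, Fin.sum_univ_two] at e00 e01 e10 e11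
    subst e10
    simp at e01 e11
    linear_combination e01 - y₂ * e11
  · rintro ⟨S, g, rfl⟩
    obtain ⟨p, r, s, t, hg⟩ : ∃ p r s t : Fq, (g : Matrix (Fin 2) (Fin 2) Fq) = !![p, r; s, t] :=
      ⟨_, _, _, _, Matrix.eta_fin_two _⟩
    have hgd : p * t - r * s ≠ 0 := by
      have := (Matrix.isUnit_iff_isUnit_det _).1 g.isUnit
      rw [hg, Matrix.det_fin_two_of] at this
      exact this.ne_zero
    have hps : (p, s) ≠ (0, 0) := by
      intro h
      simp only [Prod.mk.injEq] at h
      apply hgd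
      simp [h.1, h.2]
    have hD := hdet p s hps
    obtain ⟨D, hDe⟩ : ∃ D, D = p * (p + 2 * a * s) + (a ^ 2 - b ^ 2 * α) * s * s := ⟨_, rfl⟩
    rw [← hDe] at hD
    let k : GL (Fin 2) Fq := Matrix.GeneralLinearGroup.mkOfDetNeZero
      !![p, -(a ^ 2 - b ^ 2 * α) * s; s, p + 2 * a * s] (by
        rw [Matrix.det_fin_two_of]
        intro h
        exact hD (by linear_combination hDe + h))
    have hk : (k : Matrix (Fin 2) (Fin 2) Fq) =
      !![p, -(a ^ 2 - b ^ 2 * α) * s; s, p + 2 * a * s] := rfl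
    let d : GL (Fin 2) Fq := Matrix.GeneralLinearGroup.mkOfDetNeZero
      !![1, 0; 0, (p * t - r * s) / D] (by
        rw [Matrix.det_fin_two_of]
        simpa using ⟨hgd, hD⟩)
    have hd : (d : Matrix (Fin 2) (Fin 2) Fq) = !![1, 0; 0, (p * t - r * s) / D] := rfl
    have hkH : k ∈ H := (hH' k).2 ⟨p, s, hps, hk⟩
    have hdT : d ∈ T₁ := (hT' d).2 ⟨1, Units.mk0 _ (div_ne_zero hgd hD), by simp [hd]⟩
    let y : Fq := ((p + 2 * a * s) * r + (a ^ 2 - b ^ 2 * α) * s * t) / (p * t - r * s)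
    have hgk : g = k * γ y * d := by
      apply Units.ext
      simp only [Units.val_mul, hγ, hk, hd, hg, y]
      clear_value y k d
      clear hdT hkH hd hk
      generalize hE : p * t - r * s = E at *
      ext i j
      fin_cases i <;> fin_cases j <;> simp [Matrix.mul_apply, Fin.sum_univ_two]
      · field_simp
        rw [hDe, ← hE]
        ring
      · field_simp
        rw [hDe, ← hE]
        ring
    refine ⟨y, Subtype.ext ?_⟩
    ext x
    constructor
    · rintro ⟨h, hh, u, hu, rfl⟩
      refine ⟨h * k⁻¹, H.mul_mem hh (H.inv_mem hkH), d⁻¹ * u,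
        T₁.mul_mem (T₁.inv_mem hdT) hu, ?_⟩
      rw [hgk]; group
    · rintro ⟨h, hh, u, hu, rfl⟩
      refine ⟨h * k, H.mul_mem hh hkH, d * u, T₁.mul_mem hdT hu, ?_⟩
      rw [hgk]; group
end

section
/- Let T₂ = {2×2 matrices over Fq with rows (m, n) and (0, m) : m ∈ Fqˣ, n ∈ Fq}, a subgroup of GL₂(Fq). The map z ↦ H·γ(0,z)·T₂ is a bijection from Fqˣ onto the set of (H, T₂)-double cosets in GL₂(Fq). -/
/-- The map `z ↦ H·γ(0,z)·T₂` is a bijection from `Fqˣ` onto the set of `(H, T₂)`-double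
cosets in `GL₂(Fq)`, where `T₂` is the group of invertible upper-triangular matrices with
equal diagonal entries. -/
theorem stmt_15 (q : ℕ) (hodd : Odd q) (Fq : Type*) [Field Fq] [Fintype Fq]
    (hq : Fintype.card Fq = q)
    (a b α : Fq) (hα : ¬∃ x : Fq, x ^ 2 = α)
    (hab : ¬∃ x : Fq, x ^ 2 = a ^ 2 - b ^ 2 * α)
    (H : Subgroup (GL (Fin 2) Fq))
    (hH : (H : Set (GL (Fin 2) Fq)) = {g : GL (Fin 2) Fq | ∃ x y : Fq, (x, y) ≠ (0, 0) ∧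
      (g : Matrix (Fin 2) (Fin 2) Fq) = !![x, -(a ^ 2 - b ^ 2 * α) * y; y, x + 2 * a * y]})
    (T₂ : Subgroup (GL (Fin 2) Fq))
    (hT₂ : (T₂ : Set (GL (Fin 2) Fq)) = {g : GL (Fin 2) Fq | ∃ m : Fqˣ, ∃ n : Fq,
      (g : Matrix (Fin 2) (Fin 2) Fq) = !![(m : Fq), n; 0, (m : Fq)]})
    (γ : Fqˣ → GL (Fin 2) Fq)
    (hγ : ∀ z : Fqˣ, ((γ z : Matrix (Fin 2) (Fin 2) Fq)) = !![1, 0; 0, (z : Fq)]) :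
    Function.Bijective (fun z : Fqˣ =>
      (⟨{x | ∃ h ∈ H, ∃ t ∈ T₂, x = h * γ z * t},
        ⟨γ z, rfl⟩⟩ : {S : Set (GL (Fin 2) Fq) //
          ∃ g : GL (Fin 2) Fq, S = {x | ∃ h ∈ H, ∃ t ∈ T₂, x = h * g * t}})) := by
  have mH : ∀ g : GL (Fin 2) Fq, g ∈ H ↔ ∃ x y : Fq, (x, y) ≠ (0, 0) ∧
      (g : Matrix (Fin 2) (Fin 2) Fq) =
        !![x, -(a ^ 2 - b ^ 2 * α) * y; y, x + 2 * a * y] := by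
    intro g
    rw [← SetLike.mem_coe, hH]; rfl
  have mT : ∀ g : GL (Fin 2) Fq, g ∈ T₂ ↔ ∃ m : Fqˣ, ∃ n : Fq,
      (g : Matrix (Fin 2) (Fin 2) Fq) = !![(m : Fq), n; 0, (m : Fq)] := by
    intro g
    rw [← SetLike.mem_coe, hT₂]; rfl
  have hb : b ≠ 0 := by
    rintro rfl
    exact hab ⟨a, by ring⟩
  have hdet : ∀ x y : Fq, (x, y) ≠ (0, 0) →
      x * (x + 2 * a * y) + (a ^ 2 - b ^ 2 * α) * y * y ≠ 0 := by
    intro x y hxy h0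
    by_cases hy : y = 0
    · subst hy
      apply hxy
      have : x * x = 0 := by linear_combination h0
      simpa using this
    · apply hα
      refine ⟨(x + a * y) / (b * y), ?_⟩
      field_simp
      linear_combination h0
  constructor
  · intro z z' h
    have h1 := congrArg Subtype.val h
    have h2 : γ z' ∈ {x | ∃ h ∈ H, ∃ t ∈ T₂, x = h * γ z * t} := by
      have h3 : γ z' ∈ {x | ∃ h ∈ H, ∃ t ∈ T₂, x = h * γ z' * t} :=
        ⟨1, H.one_mem, 1, T₂.one_mem, by simp⟩
      exact (Set.ext_iff.mp h1 _).mpr h3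
    obtain ⟨k, hk, t, ht, e⟩ := h2
    obtain ⟨x, y, -, ek⟩ := (mH k).mp hk
    obtain ⟨m, n, et⟩ := (mT t).mp ht
    have e' := congrArg (fun g : GL (Fin 2) Fq => (g : Matrix (Fin 2) (Fin 2) Fq)) e
    simp only [Units.val_mul, hγ, ek, et, Matrix.mul_fin_two] at e'
    have e00 := congrFun (congrFun e' 0) 0
    have e01 := congrFun (congrFun e' 0) 1
    have e10 := congrFun (congrFun e' 1) 0
    have e11 := congrFun (congrFun e' 1) 1
    simp at e00 e01 e10 e11
    have hy : y = 0 := e10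
    subst hy
    ext
    linear_combination (-1 : Fq) * e11 + (z : Fq) * e00
  · rintro ⟨S, g, rfl⟩
    set p := (g : Matrix (Fin 2) (Fin 2) Fq) 0 0 with hp
    set u := (g : Matrix (Fin 2) (Fin 2) Fq) 0 1 with hu
    set r := (g : Matrix (Fin 2) (Fin 2) Fq) 1 0 with hr
    set s := (g : Matrix (Fin 2) (Fin 2) Fq) 1 1 with hs
    have eg : (g : Matrix (Fin 2) (Fin 2) Fq) = !![p, u; r, s] := by
      ext i j; fin_cases i <;> fin_cases j <;> rfl
    have dg : p * s - u * r ≠ 0 := by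
      have := ((Matrix.isUnit_iff_isUnit_det _).mp g.isUnit).ne_zero
      rwa [eg, Matrix.det_fin_two_of] at this
    have hpr : (p, r) ≠ (0, 0) := by
      intro h
      simp only [Prod.mk.injEq] at h
      apply dg
      rw [h.1, h.2]; ring
    have hΔ := hdet p r hpr
    obtain ⟨D, hD⟩ : ∃ D, D = p * (p + 2 * a * r) + (a ^ 2 - b ^ 2 * α) * r * r := ⟨_, rfl⟩
    rw [← hD] at hΔ
    let k : GL (Fin 2) Fq := Matrix.GeneralLinearGroup.mkOfDetNeZero
      !![p, -(a ^ 2 - b ^ 2 * α) * r; r, p + 2 * a * r] (by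
        rw [Matrix.det_fin_two_of]
        intro h; apply hΔ; rw [hD]; linear_combination h)
    let t : GL (Fin 2) Fq := Matrix.GeneralLinearGroup.mkOfDetNeZero
      !![1, ((p + 2 * a * r) * u + (a ^ 2 - b ^ 2 * α) * r * s) / D; 0, 1] (by
        rw [Matrix.det_fin_two_of]; simp)
    let z : Fqˣ := Units.mk0 ((p * s - u * r) / D) (div_ne_zero dg hΔ)
    have hk : k ∈ H := (mH k).mpr ⟨p, r, hpr, rfl⟩
    have ht : t ∈ T₂ := (mT t).mpr ⟨1, _, rfl⟩
    have key : g = k * γ z * t := by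
      apply Units.ext
      rw [Units.val_mul, Units.val_mul, hγ, eg]
      change _ = !![p, -(a ^ 2 - b ^ 2 * α) * r; r, p + 2 * a * r] *
        !![1, 0; 0, (p * s - u * r) / D] *
        !![1, ((p + 2 * a * r) * u + (a ^ 2 - b ^ 2 * α) * r * s) / D; 0, 1]
      rw [Matrix.mul_fin_two, Matrix.mul_fin_two]
      congr 1
      clear_value p u r s
      have e1 : u = (p * 1 + -(a ^ 2 - b ^ 2 * α) * r * 0) *
          (((p + 2 * a * r) * u + (a ^ 2 - b ^ 2 * α) * r * s) / D) +
          (p * 0 + -(a ^ 2 - b ^ 2 * α) * r * ((p * s - u * r) / D)) * 1 := by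
        field_simp
        linear_combination u * hD
      have e2 : s = (r * 1 + (p + 2 * a * r) * 0) *
          (((p + 2 * a * r) * u + (a ^ 2 - b ^ 2 * α) * r * s) / D) +
          (r * 0 + (p + 2 * a * r) * ((p * s - u * r) / D)) * 1 := by
        field_simp
        linear_combination s * hD
      rw [← e1, ← e2]
      simp
    refine ⟨z, Subtype.ext ?_⟩
    ext w
    constructor
    · rintro ⟨h, hh, t', ht', rfl⟩
      refine ⟨h * k⁻¹, H.mul_mem hh (H.inv_mem hk), t⁻¹ * t',
        T₂.mul_mem (T₂.inv_mem ht) ht', ?_⟩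
      rw [key]; group
    · rintro ⟨h, hh, t', ht', rfl⟩
      refine ⟨h * k, H.mul_mem hh hk, t * t', T₂.mul_mem ht ht', ?_⟩
      rw [key]; group
end

section
/- The set {C ∈ M₂(Fq) : trace(C·M(x,y)) = 0 for all x, y ∈ Fq} equals the set of all 2×2 matrices over Fq with rows (m, n·(a² − b²α) + 2a·m) and (n, −m), where m, n range over Fq. -/
/-- The set `{C ∈ M₂(Fq) : tr(C·M(x,y)) = 0 for all x, y}` equals the set of matrices
`!![m, n·(a² − b²α) + 2a·m; n, −m]` for `m, n ∈ Fq`. -/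
theorem stmt_16 (q : ℕ) (hodd : Odd q) (Fq : Type*) [Field Fq] [Fintype Fq]
    (hq : Fintype.card Fq = q) (a b α : Fq) :
    {C : Matrix (Fin 2) (Fin 2) Fq |
        ∀ x y : Fq, Matrix.trace (C * !![x, -(a ^ 2 - b ^ 2 * α) * y; y, x + 2 * a * y]) = 0} =
      {D : Matrix (Fin 2) (Fin 2) Fq |
        ∃ m n : Fq, D = !![m, n * (a ^ 2 - b ^ 2 * α) + 2 * a * m; n, -m]} := by
  ext C
  simp only [Set.mem_setOf_eq]
  constructor
  · intro h
    have h1 := h 1 0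
    have h2 := h 0 1
    simp [Matrix.trace, Matrix.mul_apply, Fin.sum_univ_two] at h1 h2
    refine ⟨C 0 0, C 1 0, ?_⟩
    ext i j
    fin_cases i <;> fin_cases j <;> simp
    · linear_combination h2 - 2 * a * h1
    · linear_combination h1
  · rintro ⟨m, n, rfl⟩ x y
    simp [Matrix.trace, Matrix.mul_apply, Fin.sum_univ_two]
    ring
end

section
/- Let a₀, a₁, m, n ∈ Fq, let X₁ = M(a₀, a₁), let D be the 2×2 matrix over Fq with rows (m, n·(a² − b²α) + 2a·m) and (n, −m), and set B = 2·X₁ − D. If a₁ ≠ 0, then B is not a scalar matrix, i.e. B ≠ λ·I for every λ ∈ Fq (so B is a regular element of M₂(Fq)). -/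
/-- With `X₁ = M(a₀, a₁)`, `D = !![m, n(a² − b²α) + 2am; n, −m]` and `B = 2·X₁ − D`, if
`a₁ ≠ 0` then `B` is not a scalar matrix. -/
theorem stmt_18 (q : ℕ) (hodd : Odd q) (Fq : Type*) [Field Fq] [Fintype Fq]
    (hq : Fintype.card Fq = q)
    (a b α : Fq) (hα : ¬∃ x : Fq, x ^ 2 = α)
    (hab : ¬∃ x : Fq, x ^ 2 = a ^ 2 - b ^ 2 * α)
    (a₀ a₁ m n : Fq) (ha₁ : a₁ ≠ 0) :
    ∀ lam : Fq,
      2 • !![a₀, -(a ^ 2 - b ^ 2 * α) * a₁; a₁, a₀ + 2 * a * a₁] -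
          !![m, n * (a ^ 2 - b ^ 2 * α) + 2 * a * m; n, -m] ≠
        lam • (1 : Matrix (Fin 2) (Fin 2) Fq) := by
  intro lam h
  have h2 : (2 : Fq) ≠ 0 := by
    apply Ring.two_ne_zero
    intro hc
    have := FiniteField.even_card_iff_char_two.1 hc
    rw [hq] at this
    rcases hodd with ⟨k, hk⟩
    omega
  have e00 := congrFun (congrFun h 0) 0
  have e01 := congrFun (congrFun h 0) 1
  have e10 := congrFun (congrFun h 1) 0
  have e11 := congrFun (congrFun h 1) 1
  simp [-neg_sub, -neg_mul] at e00 e01 e10 e11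
  apply hab
  refine ⟨a, ?_⟩
  have h4 : (2 * 2 * a₁ : Fq) ≠ 0 := mul_ne_zero (mul_ne_zero h2 h2) ha₁
  apply mul_left_cancel₀ h4
  linear_combination e01 - (a ^ 2 - b ^ 2 * α) * e10 + a * (e11 - e00)
end
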